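/- Let G be a caterpillar of order n with n ≥ 3. Then φ(G) ≥ ⌈n/2⌉ + 1, with equality if and only if G is isomorphic to one of T(1,1), T(2,1), T(2,2), T(3,1), T(3,2), T(4,2). -/

import Mathlib

open SimpleGraph

/-- A dissociation set: a set of vertices inducing a subgraph of maximum degree at most 1,
i.e., every vertex of `S` has at most one neighbour inside `S`. -/
def IsDissoc {V : Type*} (G : SimpleGraph V) (S : Set V) : Prop :=
  ∀ v ∈ S, {u | u ∈ S ∧ G.Adj v u}.Subsingleton

/-- A maximal dissociation set: a dissociation set not properly contained in another one. -/
def IsMaxDissoc {V : Type*} (G : SimpleGraph V) (S : Set V) : Prop :=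
  IsDissoc G S ∧ ∀ T : Set V, IsDissoc G T → S ⊆ T → S = T

/-- `phi G` is the number of maximal dissociation sets of `G`. -/
noncomputable def phi {V : Type*} (G : SimpleGraph V) : ℕ :=
  {S : Set V | IsMaxDissoc G S}.ncard

/-- The number of maximal dissociation sets of `G` not containing `u`. -/
noncomputable def phiNot {V : Type*} (G : SimpleGraph V) (u : V) : ℕ :=
  {S : Set V | IsMaxDissoc G S ∧ u ∉ S}.ncard

/-- The number of maximal dissociation sets `S` of `G` with `u ∈ S` and
`u` of degree 0 in the subgraph induced by `S`. -/
noncomputable def phi0 {V : Type*} (G : SimpleGraph V) (u : V) : ℕ :=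
  {S : Set V | IsMaxDissoc G S ∧ u ∈ S ∧ ∀ x ∈ S, ¬ G.Adj u x}.ncard

/-- The number of maximal dissociation sets `S` of `G` with `u ∈ S` and
`u` of degree 1 in the subgraph induced by `S`. -/
noncomputable def phi1 {V : Type*} (G : SimpleGraph V) (u : V) : ℕ :=
  {S : Set V | IsMaxDissoc G S ∧ u ∈ S ∧ ∃! x, x ∈ S ∧ G.Adj u x}.ncard

/-- A unicyclic graph: a connected graph whose number of edges equals its number of vertices
(equivalently, a connected graph with exactly one cycle). -/
def IsUnicyclic {V : Type*} [Fintype V] (G : SimpleGraph V) : Prop :=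
  G.Connected ∧ G.edgeSet.ncard = Fintype.card V

/-- The tree `T(p,q)` (for `q ≤ p`): obtained from the star `K_{1,p}` by subdividing
exactly `q` of its edges.  The centre is `Sum.inl ()`, the `p` neighbours of the centre are
`Sum.inr (Sum.inl i)`, and for `j < q` the vertex `Sum.inr (Sum.inr j)` is the subdivision
pendant attached to the `j`-th neighbour.  It has `1 + p + q` vertices. -/
def treeT (p q : ℕ) (h : q ≤ p) : SimpleGraph (Unit ⊕ Fin p ⊕ Fin q) :=
  SimpleGraph.fromRel fun a b =>
    (∃ i : Fin p, a = Sum.inl () ∧ b = Sum.inr (Sum.inl i)) ∨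
    (∃ j : Fin q, a = Sum.inr (Sum.inl (Fin.castLE h j)) ∧ b = Sum.inr (Sum.inr j))

/-- The unicyclic graph `U(p,q)` (for `q ≤ p`): obtained by identifying one vertex of the
triangle `K₃` with the centre of `T(p,q)`.  The centre is `Sum.inl ()`, the two other triangle
vertices are `Sum.inr (Sum.inl 0)` and `Sum.inr (Sum.inl 1)`, and the copy of `T(p,q)` sits on
the remaining vertices.  It has `3 + p + q` vertices. -/
def graphU (p q : ℕ) (h : q ≤ p) : SimpleGraph (Unit ⊕ Fin 2 ⊕ Fin p ⊕ Fin q) :=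
  SimpleGraph.fromRel fun a b =>
    (a = Sum.inl () ∧ b = Sum.inr (Sum.inl 0)) ∨
    (a = Sum.inl () ∧ b = Sum.inr (Sum.inl 1)) ∨
    (a = Sum.inr (Sum.inl 0) ∧ b = Sum.inr (Sum.inl 1)) ∨
    (∃ i : Fin p, a = Sum.inl () ∧ b = Sum.inr (Sum.inr (Sum.inl i))) ∨
    (∃ j : Fin q, a = Sum.inr (Sum.inr (Sum.inl (Fin.castLE h j))) ∧
      b = Sum.inr (Sum.inr (Sum.inr j)))

/-- The unicyclic graph obtained from the cycle `C_r` by attaching one pendant vertex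
`Sum.inr j` to the cycle vertex `Sum.inl (f j)` for each `j : Fin t`.  For injective `f`
this is a member of the class `𝒰_{r,t}`. -/
def graphUrtF (r t : ℕ) (f : Fin t → Fin r) : SimpleGraph (Fin r ⊕ Fin t) :=
  SimpleGraph.fromRel fun a b =>
    (∃ i j : Fin r, a = Sum.inl i ∧ b = Sum.inl j ∧ (cycleGraph r).Adj i j) ∨
    (∃ j : Fin t, a = Sum.inl (f j) ∧ b = Sum.inr j)

/-- The canonical member `U_{r,t}` of `𝒰_{r,t}` (for `t ≤ r`): the cycle `C_r` with one
pendant vertex attached to each of its first `t` vertices. -/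
def graphUrt (r t : ℕ) (h : t ≤ r) : SimpleGraph (Fin r ⊕ Fin t) :=
  graphUrtF r t (Fin.castLE h)

/-- A caterpillar: a tree in which deleting all vertices of degree 1 leaves a path. -/
def IsCaterpillar {V : Type*} [Fintype V] (G : SimpleGraph V) : Prop :=
  G.IsTree ∧ ∃ m : ℕ,
    Nonempty ((G.induce {v | 2 ≤ (G.neighborSet v).ncard}) ≃g SimpleGraph.pathGraph m)

/-- The graph `G₁` obtained from `U` by adding `k` new pendant vertices
`v₁ = Sum.inr 0, …, v_k = Sum.inr (k-1)`, each adjacent to `w`. -/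
def addPendants {V : Type*} (U : SimpleGraph V) (w : V) (k : ℕ) : SimpleGraph (V ⊕ Fin k) :=
  SimpleGraph.fromRel fun a b =>
    (∃ x y, a = Sum.inl x ∧ b = Sum.inl y ∧ U.Adj x y) ∨
    (∃ j : Fin k, a = Sum.inl w ∧ b = Sum.inr j)

/-- The graph `G₂ = G₁ - w v_k + v₁ v_k`: obtained from `U` by attaching the pendant vertices
`v₁, …, v_{k-1}` to `w` and the vertex `v_k` to `v₁`. -/
def swapPendant {V : Type*} (U : SimpleGraph V) (w : V) (k : ℕ) : SimpleGraph (V ⊕ Fin k) :=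
  SimpleGraph.fromRel fun a b =>
    (∃ x y, a = Sum.inl x ∧ b = Sum.inl y ∧ U.Adj x y) ∨
    (∃ j : Fin k, j.val < k - 1 ∧ a = Sum.inl w ∧ b = Sum.inr j) ∨
    (∃ j₀ j₁ : Fin k, j₀.val = 0 ∧ j₁.val = k - 1 ∧ a = Sum.inr j₀ ∧ b = Sum.inr j₁)

/-- The graph obtained from `H` by attaching a pendant path of length 2 at `w`:
two new vertices `v = Sum.inr 0` and `u = Sum.inr 1` with edges `w v` and `v u`. -/
def addPath2 {V : Type*} (H : SimpleGraph V) (w : V) : SimpleGraph (V ⊕ Fin 2) :=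
  SimpleGraph.fromRel fun a b =>
    (∃ x y, a = Sum.inl x ∧ b = Sum.inl y ∧ H.Adj x y) ∨
    (a = Sum.inl w ∧ b = Sum.inr 0) ∨
    (a = Sum.inr 0 ∧ b = Sum.inr 1)

/-- The graph on `Fin n` in which every vertex `j` is joined to its parent, the `j`-th entry of `l`
(a root is its own parent). -/
def parentGraph (l : List ℕ) (n : ℕ) : SimpleGraph (Fin n) where
  Adj i j := i ≠ j ∧ (l.getD j 0 = i ∨ l.getD i 0 = j)
  symm := ⟨fun _ _ h => ⟨h.1.symm, h.2.symm⟩⟩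
  loopless := ⟨fun _ h => h.1 rfl⟩

instance (l : List ℕ) (n : ℕ) : DecidableRel (parentGraph l n).Adj :=
  fun i j => inferInstanceAs (Decidable (i ≠ j ∧ (l.getD j 0 = i ∨ l.getD i 0 = j)))

/-- The three-vertex paths of `G`, each coded by the number whose binary digits mark its vertices. -/
def pathCodes {n : ℕ} (G : SimpleGraph (Fin n)) [DecidableRel G.Adj] : List ℕ :=
  (List.finRange n).flatMap fun i =>
    ((List.finRange n).filter fun j => G.Adj i j).flatMap fun j =>
      ((List.finRange n).filter fun h => j < h ∧ G.Adj i h).map fun h : Fin n =>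
        2 ^ (i : ℕ) ||| 2 ^ (j : ℕ) ||| 2 ^ (h : ℕ)

/-- The set coded by `k` contains none of the sets coded by the members of `P`. -/
def avoidsCodes (P : List ℕ) (k : ℕ) : Bool :=
  P.all fun m => k &&& m != m

/-- The number of subsets of `Fin n` that are maximal among those containing none of the sets
coded by the members of `P`. -/
def countMaximalAvoiding (n : ℕ) (P : List ℕ) : ℕ :=
  (List.range (2 ^ n)).countP fun k =>
    avoidsCodes P k && (List.range n).all fun v => k.testBit v || !avoidsCodes P (k ||| 2 ^ v)

namespace SimpleGraph

section Dissociation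

variable {V U : Type*} {G : SimpleGraph V} {H : SimpleGraph U}

theorem _root_.IsDissoc.mono {S T : Set V} (hT : IsDissoc G T) (h : S ⊆ T) : IsDissoc G S :=
  fun v hv _ ha _ hb => hT v (h hv) ⟨h ha.1, ha.2⟩ ⟨h hb.1, hb.2⟩

theorem isDissoc_pair (a b : V) : IsDissoc G {a, b} := by
  rintro v hv x ⟨hx, hvx⟩ y ⟨hy, hvy⟩
  have := hvx.ne
  have := hvy.ne
  grind

theorem _root_.IsDissoc.exists_isMaxDissoc [Finite V] {S : Set V} (hS : IsDissoc G S) :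
    ∃ M, IsMaxDissoc G M ∧ S ⊆ M := by
  obtain ⟨M, hSM, hM⟩ := Finite.exists_le_maximal (p := IsDissoc G) hS
  exact ⟨M, ⟨hM.prop, fun T hT h => h.antisymm (hM.le_of_ge hT h)⟩, hSM⟩

theorem _root_.IsMaxDissoc.mem_of_insert {M : Set V} (hM : IsMaxDissoc G M) {v : V}
    (h : IsDissoc G (insert v M)) : v ∈ M := by
  rw [hM.2 _ h (Set.subset_insert v M)]
  exact Set.mem_insert v M

theorem isMaxDissoc_iff_insert {M : Set V} :
    IsMaxDissoc G M ↔ IsDissoc G M ∧ ∀ v, v ∈ M ∨ ¬ IsDissoc G (insert v M) := by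
  refine ⟨fun h => ⟨h.1, fun v => or_iff_not_imp_right.mpr fun hv => h.mem_of_insert (not_not.mp hv)⟩,
    fun h => ⟨h.1, fun T hT hMT => hMT.antisymm fun v hv => ?_⟩⟩
  exact (h.2 v).resolve_right fun h' => h' (hT.mono (Set.insert_subset hv hMT))

theorem isDissoc_preimage_iff (e : H ↪g G) {S : Set V} (hS : S ⊆ Set.range e) :
    IsDissoc H (e ⁻¹' S) ↔ IsDissoc G S := by
  constructor
  · rintro h v hv a ⟨ha, hva⟩ b ⟨hb, hvb⟩
    obtain ⟨v, rfl⟩ := hS hv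
    obtain ⟨a, rfl⟩ := hS ha
    obtain ⟨b, rfl⟩ := hS hb
    exact congrArg e (h v hv ⟨ha, e.map_adj_iff.mp hva⟩ ⟨hb, e.map_adj_iff.mp hvb⟩)
  · intro h v hv a ha b hb
    exact e.injective (h (e v) hv ⟨ha.1, e.map_adj_iff.mpr ha.2⟩ ⟨hb.1, e.map_adj_iff.mpr hb.2⟩)

theorem _root_.IsDissoc.preimage (e : H ↪g G) {S : Set V} (hS : IsDissoc G S) :
    IsDissoc H (e ⁻¹' S) := by
  rw [← Set.preimage_inter_range]
  exact (isDissoc_preimage_iff e Set.inter_subset_right).mpr (hS.mono Set.inter_subset_left)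

theorem _root_.IsDissoc.image (e : H ↪g G) {S : Set U} (hS : IsDissoc H S) :
    IsDissoc G (e '' S) := by
  rw [← isDissoc_preimage_iff e (Set.image_subset_range e S),
    Set.preimage_image_eq _ e.injective]
  exact hS

/-- Every maximal dissociation set of an induced subgraph is the trace of one of the graph. -/
theorem setOf_isMaxDissoc_subset_image_preimage [Finite V] (e : H ↪g G) :
    {S | IsMaxDissoc H S} ⊆ (e ⁻¹' ·) '' {S | IsMaxDissoc G S} := by
  intro S hS
  obtain ⟨M, hM, hSM⟩ := (hS.1.image e).exists_isMaxDissoc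
  exact ⟨M, hM, (hS.2 _ (hM.1.preimage e) (Set.image_subset_iff.mp hSM)).symm⟩

/-- If an induced subgraph has no fewer maximal dissociation sets than the graph, then taking
traces is a bijection between the maximal dissociation sets. -/
theorem trace_bijOn_of_phi_le [Finite V] (e : H ↪g G) (h : phi G ≤ phi H) :
    Set.BijOn (e ⁻¹' ·) {S | IsMaxDissoc G S} {S | IsMaxDissoc H S} := by
  have hsub := setOf_isMaxDissoc_subset_image_preimage e
  have hfin := Set.toFinite {S | IsMaxDissoc G S}
  have hle := Set.ncard_image_le (f := (e ⁻¹' ·)) hfin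
  have heq := Set.eq_of_subset_of_ncard_le hsub (hle.trans h) (hfin.image _)
  have hinj := (Set.ncard_image_iff (f := (e ⁻¹' ·)) hfin).mp
    (hle.antisymm (h.trans (Set.ncard_le_ncard hsub (hfin.image _))))
  rw [heq]
  exact hinj.bijOn_image

theorem phi_le_phi_of_embedding [Finite V] (e : H ↪g G) : phi H ≤ phi G :=
  (Set.ncard_le_ncard (setOf_isMaxDissoc_subset_image_preimage e) ((Set.toFinite _).image _)).trans
    (Set.ncard_image_le (Set.toFinite _))

theorem phi_congr [Finite V] [Finite U] (e : H ≃g G) : phi H = phi G :=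
  (phi_le_phi_of_embedding e.toEmbedding).antisymm (phi_le_phi_of_embedding e.symm.toEmbedding)

/-- Deleting one of two leaves with a common neighbour loses a maximal dissociation set. -/
theorem phi_lt_phi_of_twin_leaves [Finite V] (e : H ↪g G) {s x y : V} (hxy : x ≠ y)
    (he : Set.range e = {x}ᶜ) (hx : ∀ z, G.Adj x z ↔ z = s) (hy : ∀ z, G.Adj y z ↔ z = s) :
    phi H < phi G := by
  by_contra! hle
  have hbij := trace_bijOn_of_phi_le e hle
  obtain ⟨M, hM, hsub⟩ := (isDissoc_pair (G := G) s x).exists_isMaxDissoc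
  have hsM : s ∈ M := hsub (by simp)
  have hxM : x ∈ M := hsub (by simp)
  have hsx : G.Adj s x := ((hx s).mpr rfl).symm
  have hsy : G.Adj s y := ((hy s).mpr rfl).symm
  have hyM : y ∉ M := fun h => hxy (hM.1 s hsM ⟨hxM, hsx⟩ ⟨h, hsy⟩)
  obtain ⟨y', rfl⟩ : y ∈ Set.range e := by simp [he, hxy.symm]
  refine hyM ((hbij.mapsTo hM).mem_of_insert (v := y') ?_)
  have hpre : insert y' (e ⁻¹' M) = e ⁻¹' (insert (e y') (M \ {x})) := by
    ext z
    have : e z ≠ x := by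
      have : e z ∈ ({x}ᶜ : Set V) := he ▸ Set.mem_range_self z
      simpa using this
    simp [this]
  simp only [hpre]
  refine IsDissoc.preimage e ?_
  rintro v hv a ⟨ha, hva⟩ b ⟨hb, hvb⟩
  have h1 : ∀ z ∈ M, G.Adj s z → z = x := fun z hz hsz => hM.1 s hsM ⟨hz, hsz⟩ ⟨hxM, hsx⟩
  have h2 : ∀ v ∈ M, ∀ a ∈ M, ∀ b ∈ M, G.Adj v a → G.Adj v b → a = b :=
    fun v hv a ha b hb hva hvb => hM.1 v hv ⟨ha, hva⟩ ⟨hb, hvb⟩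
  have h3 := hva.symm
  have h4 := hvb.symm
  simp only [Set.mem_insert_iff, Set.mem_sdiff, Set.mem_singleton_iff] at hv ha hb
  grind

/-- Deleting a pendant path with two vertices loses a maximal dissociation set. -/
theorem phi_lt_phi_of_pendant_path [Finite V] (e : H ↪g G) {t s x : V} (htx : t ≠ x)
    (he : Set.range e = {x, s}ᶜ) (hx : ∀ z, G.Adj x z ↔ z = s)
    (hs : ∀ z, G.Adj s z ↔ z = x ∨ z = t) :
    phi H < phi G := by
  by_contra! hle
  have hbij := trace_bijOn_of_phi_le e hle
  obtain ⟨M, hM, hsub⟩ := (isDissoc_pair (G := G) s t).exists_isMaxDissoc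
  have hsM : s ∈ M := hsub (by simp)
  have htM : t ∈ M := hsub (by simp)
  have hsx : G.Adj s x := (hs x).mpr (.inl rfl)
  have hst : G.Adj s t := (hs t).mpr (.inr rfl)
  have hxM : x ∉ M := fun h => htx (hM.1 s hsM ⟨htM, hst⟩ ⟨h, hsx⟩)
  have hrange : ∀ z, e z ≠ x ∧ e z ≠ s := by
    intro z
    have : e z ∈ ({x, s}ᶜ : Set V) := he ▸ Set.mem_range_self z
    simpa using this
  set N := insert x (M \ {s}) with hN
  have htrace : e ⁻¹' N = e ⁻¹' M := by
    ext z
    simp [hN, hrange z]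
  have hNmax : IsMaxDissoc G N := by
    refine ⟨?_, fun T hT hNT => ?_⟩
    · have h2 : ∀ v ∈ M, ∀ a ∈ M, ∀ b ∈ M, G.Adj v a → G.Adj v b → a = b :=
        fun v hv a ha b hb hva hvb => hM.1 v hv ⟨ha, hva⟩ ⟨hb, hvb⟩
      rintro v hv a ⟨ha, hva⟩ b ⟨hb, hvb⟩
      have h3 := hva.symm
      have h4 := hvb.symm
      simp only [hN, Set.mem_insert_iff, Set.mem_sdiff, Set.mem_singleton_iff] at hv ha hb
      grind
    · have htN : t ∈ N := by simp [hN, htM, hst.ne']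
      have hsT : s ∉ T := fun h =>
        htx (hT s h ⟨hNT htN, hst⟩ ⟨hNT (Set.mem_insert x _), hsx⟩)
      have hTtrace : e ⁻¹' M = e ⁻¹' T :=
        (hbij.mapsTo hM).2 _ (hT.preimage e) (htrace ▸ Set.preimage_mono hNT)
      refine hNT.antisymm fun z hz => ?_
      by_cases hzx : z = x
      · simp [hN, hzx]
      · obtain ⟨z, rfl⟩ : z ∈ Set.range e := by
          simp only [he, Set.mem_compl_iff, Set.mem_insert_iff, Set.mem_singleton_iff]
          grind
        have : z ∈ e ⁻¹' N := by
          rw [htrace, hTtrace]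
          exact hz
        exact this
  have : N = M := hbij.injOn hNmax hM htrace
  exact hxM (this ▸ Set.mem_insert x _)

end Dissociation

section Enumeration

theorem mem_pathCodes {n : ℕ} {G : SimpleGraph (Fin n)} [DecidableRel G.Adj] {m : ℕ} :
    m ∈ pathCodes G ↔ ∃ i j h : Fin n, G.Adj i j ∧ j < h ∧ G.Adj i h ∧
      2 ^ (i : ℕ) ||| 2 ^ (j : ℕ) ||| 2 ^ (h : ℕ) = m := by
  simp only [pathCodes, List.mem_flatMap, List.mem_map, List.mem_filter, List.mem_finRange,
    decide_eq_true_eq, true_and]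
  constructor
  · rintro ⟨i, j, hij, h, ⟨hjh, hih⟩, rfl⟩
    exact ⟨i, j, h, hij, hjh, hih, rfl⟩
  · rintro ⟨i, j, h, hij, hjh, hih, rfl⟩
    exact ⟨i, j, hij, h, ⟨hjh, hih⟩, rfl⟩

theorem and_eq_right_iff_testBit {k m : ℕ} :
    k &&& m = m ↔ ∀ i, m.testBit i → k.testBit i := by
  rw [Nat.eq_iff_testBit_eq]
  simp only [Nat.testBit_and]
  refine forall_congr' fun i => ?_
  cases k.testBit i <;> cases m.testBit i <;> simp

theorem avoidsCodes_pathCodes_iff {n : ℕ} (G : SimpleGraph (Fin n)) [DecidableRel G.Adj] (k : ℕ) :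
    avoidsCodes (pathCodes G) k = true ↔ IsDissoc G {i | k.testBit i} := by
  simp only [avoidsCodes, List.all_eq_true, mem_pathCodes, bne_iff_ne, ne_eq,
    and_eq_right_iff_testBit, IsDissoc, Set.Subsingleton]
  constructor
  · intro hk v hv a ha b hb
    by_contra hab
    wlog h : a < b generalizing a b
    · exact this hb ha (Ne.symm hab) (lt_of_le_of_ne (not_lt.mp h) (Ne.symm hab))
    refine hk _ ⟨v, a, b, ha.2, h, hb.2, rfl⟩ fun i hi => ?_
    simp only [Nat.testBit_or, Nat.testBit_two_pow, Bool.or_eq_true, decide_eq_true_eq] at hi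
    rcases hi with (rfl | rfl) | rfl
    exacts [hv, ha.1, hb.1]
  · rintro hk m ⟨i, j, h, hij, hjh, hih, rfl⟩ hm
    simp only [Nat.testBit_or, Nat.testBit_two_pow, Bool.or_eq_true, decide_eq_true_eq] at hm
    exact hjh.ne (hk i (hm i (by simp)) ⟨hm j (by simp), hij⟩ ⟨hm h (by simp), hih⟩)

theorem phi_eq_countMaximalAvoiding {n : ℕ} (G : SimpleGraph (Fin n)) [DecidableRel G.Adj] :
    phi G = countMaximalAvoiding n (pathCodes G) := by
  have key (k : ℕ) : (avoidsCodes (pathCodes G) k && (List.range n).all fun v =>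
      k.testBit v || !avoidsCodes (pathCodes G) (k ||| 2 ^ v)) = true ↔
      IsMaxDissoc G {i | k.testBit i} := by
    have hins (v : Fin n) : {i : Fin n | (k ||| 2 ^ (v : ℕ)).testBit i} =
        insert v {i : Fin n | k.testBit i} := by
      ext i
      simp only [Nat.testBit_or, Nat.testBit_two_pow, Bool.or_eq_true, decide_eq_true_eq,
        Set.mem_insert_iff, Set.mem_ofPred_eq, Fin.ext_iff]
      rw [or_comm, eq_comm]
    simp only [Bool.and_eq_true, List.all_eq_true, List.mem_range, Bool.or_eq_true,
      Bool.not_eq_true', ← Bool.not_eq_true, isMaxDissoc_iff_insert,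
      avoidsCodes_pathCodes_iff, Fin.forall_iff, Set.mem_ofPred_eq]
    refine and_congr_right fun _ => forall₂_congr fun v hv => ?_
    rw [← hins ⟨v, hv⟩]
  rw [countMaximalAvoiding, List.countP_eq_length_filter, ← List.toFinset_card_of_nodup
    (List.nodup_range.filter _), phi, ← Set.ncard_coe_finset]
  symm
  refine Set.ncard_congr (fun k _ => {i | k.testBit i}) ?_ ?_ ?_
  · intro k hk
    simpa [key] using (List.mem_filter.mp (List.mem_toFinset.mp hk)).2
  · intro a b ha hb hab
    simp only [List.coe_toFinset, List.mem_filter, List.mem_range, Set.mem_ofPred_eq] at ha hb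
    refine Nat.eq_of_testBit_eq fun i => ?_
    by_cases hi : i < n
    · have := Set.ext_iff.mp hab ⟨i, hi⟩
      simpa using this
    · have hpow : 2 ^ n ≤ 2 ^ i := Nat.pow_le_pow_right (by norm_num) (not_lt.mp hi)
      rw [Nat.testBit_lt_two_pow (ha.1.trans_le hpow), Nat.testBit_lt_two_pow (hb.1.trans_le hpow)]
  · classical
    intro S hS
    have hbits : {i : Fin n | (Nat.ofBits fun i => decide (i ∈ S)).testBit i} = S := by
      ext i
      simp
    refine ⟨Nat.ofBits fun i => decide (i ∈ S), ?_, hbits⟩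
    simp only [List.coe_toFinset, List.mem_filter, List.mem_range, Set.mem_ofPred_eq]
    exact ⟨Nat.ofBits_lt_two_pow _, (key _).mpr (by rwa [hbits])⟩

end Enumeration

/-- Three neighbours of some vertex have neighbours other than that vertex. -/
def HasSpider {V : Type*} (G : SimpleGraph V) : Prop :=
  ∃ c a, G.Adj c a ∧ (∃ z, G.Adj a z ∧ z ≠ c) ∧
    ∃ b, G.Adj c b ∧ a ≠ b ∧ (∃ z, G.Adj b z ∧ z ≠ c) ∧
    ∃ d, G.Adj c d ∧ a ≠ d ∧ b ≠ d ∧ ∃ z, G.Adj d z ∧ z ≠ c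

section Spider

variable {V U : Type*} {G : SimpleGraph V} {H : SimpleGraph U}

instance {n : ℕ} (G : SimpleGraph (Fin n)) [DecidableRel G.Adj] : Decidable (HasSpider G) := by
  unfold HasSpider
  infer_instance

theorem HasSpider.map (e : H ↪g G) (h : HasSpider H) : HasSpider G := by
  obtain ⟨c, a, hca, ⟨x, hx, hxc⟩, b, hcb, hab, ⟨y, hy, hyc⟩, d, hcd, had, hbd, z, hz, hzc⟩ := h
  exact ⟨e c, e a, e.map_adj_iff.mpr hca, ⟨e x, e.map_adj_iff.mpr hx, e.injective.ne hxc⟩,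
    e b, e.map_adj_iff.mpr hcb, e.injective.ne hab, ⟨e y, e.map_adj_iff.mpr hy, e.injective.ne hyc⟩,
    e d, e.map_adj_iff.mpr hcd, e.injective.ne had, e.injective.ne hbd,
    e z, e.map_adj_iff.mpr hz, e.injective.ne hzc⟩

theorem _root_.IsCaterpillar.not_hasSpider [Fintype V] (h : IsCaterpillar G) : ¬HasSpider G := by
  rintro ⟨c, a, hca, ⟨x, hx, hxc⟩, b, hcb, hab, ⟨y, hy, hyc⟩, d, hcd, had, hbd, z, hz, hzc⟩
  obtain ⟨-, m, ⟨e⟩⟩ := h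
  have mem {v u w : V} (hu : G.Adj v u) (hw : G.Adj v w) (huw : u ≠ w) :
      v ∈ {v | 2 ≤ (G.neighborSet v).ncard} :=
    (Set.one_lt_ncard_iff).mpr ⟨u, w, hu, hw, huw⟩
  have hc := mem hca hcb hab
  have ha := mem hx hca.symm hxc
  have hb := mem hy hcb.symm hyc
  have hd := mem hz hcd.symm hzc
  have key {v : V} (hv : v ∈ {v | 2 ≤ (G.neighborSet v).ncard}) (hcv : G.Adj c v) :
      (pathGraph m).Adj (e ⟨c, hc⟩) (e ⟨v, hv⟩) := e.map_adj_iff.mpr hcv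
  have hne {u v : V} (hu : u ∈ {v | 2 ≤ (G.neighborSet v).ncard})
      (hv : v ∈ {v | 2 ≤ (G.neighborSet v).ncard}) (huv : u ≠ v) :
      (e ⟨u, hu⟩ : ℕ) ≠ e ⟨v, hv⟩ := fun h =>
    huv (congrArg Subtype.val (e.injective (Fin.ext h)))
  have h1 := pathGraph_adj.mp (key ha hca)
  have h2 := pathGraph_adj.mp (key hb hcb)
  have h3 := pathGraph_adj.mp (key hd hcd)
  have := hne ha hb hab
  have := hne hb hd hbd
  have := hne ha hd had
  omega

end Spider

section Leaves

variable {V U : Type*} {G : SimpleGraph V} {H : SimpleGraph U}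

theorem range_embedding_compl_singleton (x : V) :
    Set.range (Embedding.induce (G := G) ({x}ᶜ : Set V)) = {x}ᶜ := by
  ext; simp [Embedding.induce]

theorem exists_iso_parentGraph_append (e : H ↪g G) {x s : V} (he : Set.range e = {x}ᶜ)
    (hx : ∀ z, G.Adj x z ↔ z = s) {l : List ℕ} (hl : ∀ a ∈ l, a < l.length)
    (f : H ≃g parentGraph l l.length) {k : U} (hk : e k = s) :
    ∃ g : G ≃g parentGraph (l ++ [(f k : ℕ)]) (l.length + 1), g x = Fin.last _ := by
  have hxr : ∀ u, e u ≠ x := fun u h => by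
    have : e u ∈ ({x}ᶜ : Set V) := he ▸ Set.mem_range_self u
    exact this h
  let φ : Fin (l.length + 1) → V := Fin.lastCases x fun i => e (f.symm i)
  have hlast : φ (Fin.last _) = x := by simp [φ]
  have hcast (i) : φ (Fin.castSucc i) = e (f.symm i) := by simp [φ]
  have hbij : Function.Bijective φ := by
    constructor
    · intro i j
      cases i using Fin.lastCases <;> cases j using Fin.lastCases <;>
        simp [hlast, hcast, hxr, (hxr _).symm]
    · intro v
      by_cases hv : v = x
      · exact ⟨Fin.last _, hlast.trans hv.symm⟩
      · obtain ⟨u, rfl⟩ : v ∈ Set.range e := he ▸ hv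
        exact ⟨(f u).castSucc, by simp [hcast]⟩
  have hfk (i : Fin l.length) : e (f.symm i) = s ↔ (f k : ℕ) = i := by
    rw [← hk, e.injective.eq_iff, ← Fin.ext_iff, eq_comm]
    exact f.toEquiv.eq_symm_apply
  have hlt := (f k).isLt
  have hadj (i j) : G.Adj (φ i) (φ j) ↔
      (parentGraph (l ++ [(f k : ℕ)]) (l.length + 1)).Adj i j := by
    cases i using Fin.lastCases with
    | last =>
      cases j using Fin.lastCases with
      | last => simp
      | cast j =>
        rw [hlast, hcast, hx, hfk]
        have := hl _ (List.getElem_mem j.isLt)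
        have := j.isLt
        simp [parentGraph, Fin.ext_iff]
        grind
    | cast i =>
      cases j using Fin.lastCases with
      | last =>
        rw [hlast, hcast, G.adj_comm, hx, hfk]
        have := hl _ (List.getElem_mem i.isLt)
        have := i.isLt
        simp [parentGraph, Fin.ext_iff]
        grind
      | cast j =>
        rw [hcast, hcast, e.map_adj_iff, f.symm.map_adj_iff]
        simp [parentGraph, Fin.ext_iff]
  let g : parentGraph (l ++ [(f k : ℕ)]) (l.length + 1) ≃g G :=
    ⟨Equiv.ofBijective φ hbij, hadj _ _⟩
  exact ⟨g.symm, g.symm_apply_eq.mpr hlast.symm⟩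

end Leaves

section Tree

variable {V : Type*} {G : SimpleGraph V}

theorem IsAcyclic.adj_start_iff_of_longest (hG : G.IsAcyclic) {u s v : V} {h : G.Adj u s}
    {p : G.Walk s v} (hp : (p.cons h).IsPath)
    (hmax : ∀ (u' v' : V) (q : G.Walk u' v'), q.IsPath → q.length ≤ (p.cons h).length) (z : V) :
    G.Adj u z ↔ z = s := by
  refine ⟨fun hz => ?_, fun hz => hz ▸ h⟩
  by_cases hmem : z ∈ (p.cons h).support
  · simpa using hG.eq_snd_of_adj_start hp hz hmem
  · have := hmax _ _ _ (hp.cons hmem (h := hz.symm))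
    simp at this

theorem IsTree.exists_twin_leaves_or_pendant_path [Finite V] (hG : G.IsTree)
    (hV : 3 ≤ Nat.card V) :
    (∃ s x y, x ≠ y ∧ (∀ z, G.Adj x z ↔ z = s) ∧ ∀ z, G.Adj y z ↔ z = s) ∨
      ∃ t s x, t ≠ x ∧ (∀ z, G.Adj x z ↔ z = s) ∧ ∀ z, G.Adj s z ↔ z = x ∨ z = t := by
  have := hG.nonempty
  obtain ⟨u, v, p, hp, hmax⟩ := Walk.exists_isPath_forall_isPath_length_le_length G
  have third (a b : V) : ∃ w, w ≠ a ∧ w ≠ b := by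
    by_contra! h
    have huniv : (Set.univ : Set V) ⊆ {a, b} := fun w _ => or_iff_not_imp_left.mpr (h w)
    have h1 := Set.ncard_le_ncard huniv (Set.toFinite _)
    have h2 := Set.ncard_insert_le a {b}
    rw [Set.ncard_univ] at h1
    rw [Set.ncard_singleton] at h2
    omega
  cases p with
  | nil =>
    obtain ⟨w, hw, -⟩ := third u u
    obtain ⟨q, hq⟩ := hG.connected.exists_isPath w u
    cases q with
    | nil => exact absurd rfl hw
    | cons h q => simpa using hmax _ _ _ hq
  | @cons _ s _ h p =>
    have hu := hG.isAcyclic.adj_start_iff_of_longest hp hmax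
    cases p with
    | nil =>
      obtain ⟨w, hwu, hws⟩ := third u v
      obtain ⟨q, hq⟩ := hG.connected.exists_isPath u w
      cases q with
      | nil => exact absurd rfl hwu
      | cons h' q =>
        cases q with
        | nil => exact absurd ((hu _).mp h') hws
        | cons h'' q =>
          have := hmax _ _ _ hq
          simp at this
    | @cons _ t _ h' p =>
      have hsp := hp.of_cons
      have htu : t ≠ u := by
        rintro rfl
        simp at hp
      by_cases hy : ∃ y, y ≠ u ∧ y ≠ t ∧ G.Adj s y
      · obtain ⟨y, hyu, hyt, hsy⟩ := hy
        refine .inl ⟨s, u, y, hyu.symm, hu, ?_⟩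
        have hmem : y ∉ (p.cons h').support := fun hmem =>
          hyt (by simpa using hG.isAcyclic.eq_snd_of_adj_start hsp hsy hmem)
        exact hG.isAcyclic.adj_start_iff_of_longest (hsp.cons hmem (h := hsy.symm))
          (by simpa using hmax)
      · push Not at hy
        refine .inr ⟨t, s, u, htu, hu, fun z => ⟨fun hz => ?_, ?_⟩⟩
        · by_contra! hne
          exact hy z hne.1 hne.2 hz
        · rintro (rfl | rfl)
          exacts [h.symm, h']

theorem IsTree.induce_compl_singleton (hG : G.IsTree) {x s : V} (hx : ∀ z, G.Adj x z ↔ z = s) :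
    (G.induce {x}ᶜ).IsTree := by
  have hset : G.neighborSet x = {s} := by ext z; exact hx z
  have : Fintype (G.neighborSet x) := hset ▸ inferInstance
  refine ⟨hG.connected.induce_compl_singleton_of_degree_eq_one (v := x) ?_, hG.isAcyclic.induce _⟩
  rw [degree_eq_one_iff_existsUnique_adj]
  exact ⟨s, (hx s).mpr rfl, fun z => (hx z).mp⟩

theorem IsTree.exists_leaf [Finite V] [Nontrivial V] (hG : G.IsTree) :
    ∃ s x, ∀ z, G.Adj x z ↔ z = s := by
  classical
  have := Fintype.ofFinite V
  obtain ⟨x, hx⟩ := hG.exists_vert_degree_one_of_nontrivial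
  obtain ⟨s, hs, huniq⟩ := degree_eq_one_iff_existsUnique_adj.mp hx
  exact ⟨s, x, fun z => ⟨huniq z, fun h => h ▸ hs⟩⟩

end Tree

/-- The graphs with codes `l` and `l'` of equal length are isomorphic. -/
def CodesIso (l l' : List ℕ) : Prop :=
  ∃ σ ∈ (List.finRange l.length).permutations', ∀ i j : Fin l.length,
    (parentGraph l' l.length).Adj (σ.getD i i) (σ.getD j j) ↔ (parentGraph l l.length).Adj i j

instance (l l' : List ℕ) : Decidable (CodesIso l l') := by
  unfold CodesIso
  infer_instance

theorem CodesIso.nonempty_iso {l l' : List ℕ} (h : CodesIso l l') :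
    Nonempty (parentGraph l l.length ≃g parentGraph l' l.length) := by
  obtain ⟨σ, hσ, hadj⟩ := h
  have hperm := List.mem_permutations'.mp hσ
  have hlen : σ.length = l.length := by simpa using hperm.length_eq
  have hnodup : σ.Nodup := hperm.nodup_iff.mpr (List.nodup_finRange _)
  have hinj : Function.Injective fun i : Fin l.length => σ.getD i i := by
    intro i j hij
    have hi : (i : ℕ) < σ.length := hlen.symm ▸ i.isLt
    have hj : (j : ℕ) < σ.length := hlen.symm ▸ j.isLt
    simp only [List.getD_eq_getElem _ _ hi, List.getD_eq_getElem _ _ hj] at hij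
    exact Fin.ext ((hnodup.getElem_inj_iff).mp hij)
  exact ⟨Equiv.ofBijective _ (Finite.injective_iff_bijective.mp hinj), hadj _ _⟩

/-- The parent codes of the six minimizing trees, from `T(1,1)` to `T(4,2)`. -/
def minimizerCodes : List (List ℕ) :=
  [[0, 0, 1], [0, 0, 0, 1], [0, 0, 0, 1, 2], [0, 0, 0, 0, 1], [0, 0, 0, 0, 1, 2],
    [0, 0, 0, 0, 0, 1, 2]]

/-- The graph with code `l` has a spider, is minimizing, or has more maximal dissociation sets than
the minimum. -/
def IsHandled (l : List ℕ) : Prop :=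
  (l.length + 1) / 2 + 1 < countMaximalAvoiding l.length (pathCodes (parentGraph l l.length)) ∨
    HasSpider (parentGraph l l.length) ∨
    ∃ l' ∈ minimizerCodes, l'.length = l.length ∧ CodesIso l l'

instance (l : List ℕ) : Decidable (IsHandled l) := by
  unfold IsHandled
  infer_instance

theorem isHandled_leaf :
    ∀ l ∈ minimizerCodes, ∀ v < l.length, IsHandled (l ++ [v]) := by
  decide +kernel

theorem isHandled_path :
    ∀ l ∈ minimizerCodes, Odd l.length → ∀ v < l.length, IsHandled (l ++ [v] ++ [l.length]) := by
  decide +kernel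

theorem phi_of_iso_minimizer {V : Type*} [Finite V] {G : SimpleGraph V} {l : List ℕ}
    (hl : l ∈ minimizerCodes) (f : G ≃g parentGraph l l.length) :
    phi G = (l.length + 1) / 2 + 1 := by
  have : ∀ l ∈ minimizerCodes,
      countMaximalAvoiding l.length (pathCodes (parentGraph l l.length)) = (l.length + 1) / 2 + 1 := by
    decide +kernel
  rw [phi_congr f, phi_eq_countMaximalAvoiding, this l hl]

/-- `G`, of order `n`, is one of the six minimizing trees. -/
def IsMinimizer {V : Type*} (G : SimpleGraph V) (n : ℕ) : Prop :=
  ∃ l ∈ minimizerCodes, l.length = n ∧ Nonempty (G ≃g parentGraph l l.length)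

section Induction

variable {V U : Type*} {G : SimpleGraph V} {H : SimpleGraph U}

theorem IsMinimizer.phi_eq [Finite V] {n : ℕ} (h : IsMinimizer G n) : phi G = (n + 1) / 2 + 1 := by
  obtain ⟨l, hl, rfl, ⟨f⟩⟩ := h
  exact phi_of_iso_minimizer hl f

theorem IsHandled.lt_phi_or_isMinimizer [Finite V] (hG : ¬HasSpider G) {l : List ℕ}
    (hl : IsHandled l) (f : G ≃g parentGraph l l.length) :
    (l.length + 1) / 2 + 1 < phi G ∨ IsMinimizer G l.length := by
  obtain h | h | ⟨l', hl', hlen, h⟩ := hl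
  · exact .inl (by rwa [phi_congr f, phi_eq_countMaximalAvoiding])
  · exact absurd (h.map f.symm.toEmbedding) hG
  · obtain ⟨g⟩ := h.nonempty_iso
    exact .inr ⟨l', hl', hlen, ⟨hlen ▸ f.trans g⟩⟩

theorem lt_of_mem_of_mem_minimizerCodes : ∀ l ∈ minimizerCodes, ∀ a ∈ l, a < l.length := by
  decide

theorem lt_phi_or_isMinimizer_of_leaf [Finite V] (hG : ¬HasSpider G) (e : H ↪g G) {x s : V}
    (he : Set.range e = {x}ᶜ) (hx : ∀ z, G.Adj x z ↔ z = s) {n : ℕ} (hH : IsMinimizer H n) :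
    (n + 2) / 2 + 1 < phi G ∨ IsMinimizer G (n + 1) := by
  obtain ⟨l, hl, rfl, ⟨f⟩⟩ := hH
  obtain ⟨k, rfl⟩ : s ∈ Set.range e :=
    he ▸ fun h : s = x => G.loopless.irrefl x ((hx x).mpr h.symm)
  obtain ⟨g, -⟩ :=
    exists_iso_parentGraph_append e he hx (lt_of_mem_of_mem_minimizerCodes l hl) f rfl
  have := (isHandled_leaf l hl _ (f k).isLt).lt_phi_or_isMinimizer hG
    (by rw [List.length_append]; exact g)
  rwa [List.length_append] at this

theorem lt_phi_or_isMinimizer_of_path [Finite V] (hG : ¬HasSpider G) {t s x : V}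
    (htx : t ≠ x) (hx : ∀ z, G.Adj x z ↔ z = s) (hs : ∀ z, G.Adj s z ↔ z = x ∨ z = t)
    {s' : ({x}ᶜ : Set V)} (hs' : s' = s) {n : ℕ} (hn : Odd n)
    (hH : IsMinimizer ((G.induce {x}ᶜ).induce {s'}ᶜ) n) :
    (n + 3) / 2 + 1 < phi G ∨ IsMinimizer G (n + 2) := by
  obtain ⟨l, hl, rfl, ⟨f⟩⟩ := hH
  have hst : s ≠ t := ((hs t).mpr (.inr rfl)).ne
  have hlt := lt_of_mem_of_mem_minimizerCodes l hl
  have hadj (z : ({x}ᶜ : Set V)) : (G.induce {x}ᶜ).Adj s' z ↔ z = ⟨t, htx⟩ := by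
    have hz : (z : V) ≠ x := z.2
    simp [hs', hs, hz, Subtype.ext_iff]
  let k : ({s'}ᶜ : Set ({x}ᶜ : Set V)) :=
    ⟨⟨t, htx⟩, fun h => hst (hs' ▸ (congrArg Subtype.val h).symm)⟩
  obtain ⟨g, hg⟩ := exists_iso_parentGraph_append (Embedding.induce _)
    (range_embedding_compl_singleton s') hadj hlt f (k := k) rfl
  have hlen : (l ++ [(f k : ℕ)]).length = l.length + 1 := by simp
  have hlt' : ∀ a ∈ l ++ [(f k : ℕ)], a < (l ++ [(f k : ℕ)]).length := by
    intro a ha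
    rw [hlen]
    rcases List.mem_append.mp ha with ha | ha
    · exact (hlt a ha).trans (Nat.lt_succ_self _)
    · rw [List.mem_singleton.mp ha]
      exact (f k).isLt.trans (Nat.lt_succ_self _)
  obtain ⟨g', hg'⟩ : ∃ g' : G.induce {x}ᶜ ≃g
      parentGraph (l ++ [(f k : ℕ)]) (l ++ [(f k : ℕ)]).length, (g' s' : ℕ) = l.length := by
    rw [hlen]
    exact ⟨g, by rw [hg]; rfl⟩
  obtain ⟨r, -⟩ := exists_iso_parentGraph_append (Embedding.induce _)
    (range_embedding_compl_singleton x) hx hlt' g' (k := s') hs'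
  rw [hg'] at r
  have := (isHandled_path l hl hn _ (f k).isLt).lt_phi_or_isMinimizer hG
    (by rw [List.length_append]; exact r)
  rwa [List.length_append, List.length_append] at this

theorem card_compl_singleton [Finite V] (x : V) :
    Nat.card ({x}ᶜ : Set V) = Nat.card V - 1 := by
  rw [Nat.card_coe_set_eq, Set.ncard_compl, Set.ncard_singleton]

theorem IsTree.isMinimizer_of_card_eq_three [Finite V] (hG : G.IsTree) (hV : Nat.card V = 3) :
    IsMinimizer G 3 := by
  have : Nontrivial V := Finite.one_lt_card_iff_nontrivial.mp (by omega)
  obtain ⟨s, x, hx⟩ := hG.exists_leaf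
  have hH := hG.induce_compl_singleton hx
  have hcard := card_compl_singleton x
  have : Nontrivial ({x}ᶜ : Set V) := Finite.one_lt_card_iff_nontrivial.mp (by omega)
  obtain ⟨t, y, hy⟩ := hH.exists_leaf
  have hcard' : Nat.card ({y}ᶜ : Set ({x}ᶜ : Set V)) = 1 := by
    rw [card_compl_singleton]
    omega
  have := (Nat.card_eq_one_iff_unique.mp hcard').1
  let f : (G.induce {x}ᶜ).induce {y}ᶜ ≃g parentGraph [0] [0].length :=
    ⟨Finite.equivFinOfCardEq hcard', fun {a b} => by
      simp [Subsingleton.elim a b]⟩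
  have hmem : t ∈ ({y}ᶜ : Set ({x}ᶜ : Set V)) := ((hy t).mpr rfl).ne'
  obtain ⟨g, -⟩ := exists_iso_parentGraph_append (Embedding.induce _)
    (range_embedding_compl_singleton y) hy (by decide) f (k := ⟨t, hmem⟩) rfl
  have hk : (f ⟨t, hmem⟩ : ℕ) = 0 := Nat.lt_one_iff.mp (f ⟨t, hmem⟩).isLt
  rw [hk] at g
  have hmem' : s ∈ ({x}ᶜ : Set V) := ((hx s).mpr rfl).ne'
  obtain ⟨r, -⟩ := exists_iso_parentGraph_append (l := [0, 0]) (Embedding.induce _)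
    (range_embedding_compl_singleton x) hx (by decide) g (k := ⟨s, hmem'⟩) rfl
  have hiso : ∀ v < 2, CodesIso ([0, 0] ++ [v]) [0, 0, 1] := by decide +kernel
  obtain ⟨r'⟩ := (hiso _ (g ⟨s, hmem'⟩).isLt).nonempty_iso
  exact ⟨[0, 0, 1], by decide, rfl, ⟨r.trans r'⟩⟩

theorem IsTree.lt_phi_or_isMinimizer [Finite V] (hG : G.IsTree) (hG' : ¬HasSpider G) {n : ℕ}
    (hV : Nat.card V = n) (hn : 3 ≤ n) : (n + 1) / 2 + 1 < phi G ∨ IsMinimizer G n := by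
  induction n using Nat.strong_induction_on generalizing V with
  | _ n ih =>
    obtain rfl | hn := hn.eq_or_lt
    · exact .inr (hG.isMinimizer_of_card_eq_three hV)
    have leaf {x s : V} (hx : ∀ z, G.Adj x z ↔ z = s) :
        n / 2 + 1 < phi (G.induce {x}ᶜ) ∨ IsMinimizer (G.induce {x}ᶜ) (n - 1) := by
      have := ih (n - 1) (by omega) (hG.induce_compl_singleton hx)
        (fun h => hG' (h.map (Embedding.induce _))) (by rw [card_compl_singleton, hV]) (by omega)
      rwa [Nat.sub_add_cancel (by omega)] at this
    have extend {x s : V} (hx : ∀ z, G.Adj x z ↔ z = s)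
        (h : IsMinimizer (G.induce {x}ᶜ) (n - 1)) :
        (n + 1) / 2 + 1 < phi G ∨ IsMinimizer G n := by
      have := lt_phi_or_isMinimizer_of_leaf hG' (Embedding.induce _)
        (range_embedding_compl_singleton x) hx h
      rwa [Nat.sub_add_cancel (by omega), show n - 1 + 2 = n + 1 by omega] at this
    rcases Nat.even_or_odd n with heven | hodd
    · have : Nontrivial V := Finite.one_lt_card_iff_nontrivial.mp (by omega)
      obtain ⟨s, x, hx⟩ := hG.exists_leaf
      rcases leaf hx with h | h
      · have := phi_le_phi_of_embedding (Embedding.induce (G := G) ({x}ᶜ : Set V))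
        obtain ⟨m, rfl⟩ := heven
        exact .inl (by omega)
      · exact extend hx h
    · rcases hG.exists_twin_leaves_or_pendant_path (by omega) with
        ⟨s, x, y, hxy, hx, hy⟩ | ⟨t, s, x, htx, hx, hs⟩
      · rcases leaf hx with h | h
        · have := phi_lt_phi_of_twin_leaves (Embedding.induce (G := G) ({x}ᶜ : Set V)) hxy
            (range_embedding_compl_singleton x) hx hy
          obtain ⟨m, rfl⟩ := hodd
          exact .inl (by omega)
        · exact extend hx h
      · have hsx : s ≠ x := ((hx s).mpr rfl).ne'
        have hst : s ≠ t := ((hs t).mpr (.inr rfl)).ne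
        let s' : ({x}ᶜ : Set V) := ⟨s, hsx⟩
        have hadj (z : ({x}ᶜ : Set V)) : (G.induce {x}ᶜ).Adj s' z ↔ z = ⟨t, htx⟩ := by
          have hz : (z : V) ≠ x := z.2
          simp [s', hs, hz, Subtype.ext_iff]
        have hcard : Nat.card ({s'}ᶜ : Set ({x}ᶜ : Set V)) = n - 2 := by
          rw [card_compl_singleton, card_compl_singleton, hV, Nat.sub_sub]
        let e : (G.induce {x}ᶜ).induce {s'}ᶜ ↪g G :=
          (Embedding.induce (G := G) _).comp (Embedding.induce _)
        have he : Set.range e = {x, s}ᶜ := by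
          ext z
          constructor
          · rintro ⟨⟨⟨z, hz⟩, hz'⟩, rfl⟩
            exact not_or.mpr ⟨hz, fun h => hz' (Subtype.ext h)⟩
          · exact fun hz => ⟨⟨⟨z, fun h => hz (.inl h)⟩, fun h => hz (.inr (congrArg Subtype.val h))⟩,
              rfl⟩
        obtain ⟨m, rfl⟩ := hodd
        have := ih (2 * m + 1 - 2) (by omega)
          ((hG.induce_compl_singleton hx).induce_compl_singleton hadj)
          (fun h => hG' (h.map e)) hcard (by omega)
        rcases this with h | h
        · have := phi_lt_phi_of_pendant_path e htx he hx hs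
          exact .inl (by omega)
        · have := lt_phi_or_isMinimizer_of_path hG' htx hx hs (s' := s') rfl
            (by rw [Nat.odd_iff]; omega) h
          rwa [show 2 * m + 1 - 2 + 3 = 2 * m + 1 + 1 by omega,
            show 2 * m + 1 - 2 + 2 = 2 * m + 1 by omega] at this

end Induction

/-- The numbering of the vertices of `T(p,q)` from the centre outwards. -/
def treeTEquiv (p q : ℕ) : Unit ⊕ Fin p ⊕ Fin q ≃ Fin (1 + (p + q)) :=
  (Equiv.sumCongr (Equiv.ofUnique Unit (Fin 1)) finSumFinEquiv).trans finSumFinEquiv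

instance (p q : ℕ) (h : q ≤ p) : DecidableRel (treeT p q h).Adj := fun a b => by
  simp only [treeT, fromRel_adj]
  infer_instance

/-- If the numbering `treeTEquiv` respects adjacency, it is an isomorphism. -/
def treeTIso {p q : ℕ} {h : q ≤ p} {l : List ℕ}
    (hl : ∀ a b, (parentGraph l (1 + (p + q))).Adj (treeTEquiv p q a) (treeTEquiv p q b) ↔
      (treeT p q h).Adj a b) : treeT p q h ≃g parentGraph l (1 + (p + q)) :=
  ⟨treeTEquiv p q, hl _ _⟩

theorem exists_minimizerCodes_iff {P : List ℕ → Prop} :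
    (∃ l ∈ minimizerCodes, P l) ↔ P [0, 0, 1] ∨ P [0, 0, 0, 1] ∨ P [0, 0, 0, 1, 2] ∨
      P [0, 0, 0, 0, 1] ∨ P [0, 0, 0, 0, 1, 2] ∨ P [0, 0, 0, 0, 0, 1, 2] := by
  simp [minimizerCodes]

theorem exists_iso_parentGraph_iff_treeT {V : Type*} (G : SimpleGraph V) :
    (∃ l ∈ minimizerCodes, Nonempty (G ≃g parentGraph l l.length)) ↔
      Nonempty (G ≃g treeT 1 1 (by omega)) ∨
      Nonempty (G ≃g treeT 2 1 (by omega)) ∨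
      Nonempty (G ≃g treeT 2 2 (by omega)) ∨
      Nonempty (G ≃g treeT 3 1 (by omega)) ∨
      Nonempty (G ≃g treeT 3 2 (by omega)) ∨
      Nonempty (G ≃g treeT 4 2 (by omega)) := by
  have congr {W W' : Type} {K : SimpleGraph W} {K' : SimpleGraph W'} (e : K' ≃g K) :
      Nonempty (G ≃g K) ↔ Nonempty (G ≃g K') :=
    ⟨fun ⟨f⟩ => ⟨f.trans e.symm⟩, fun ⟨f⟩ => ⟨f.trans e⟩⟩
  rw [exists_minimizerCodes_iff]
  exact or_congr (congr (treeTIso (by decide +kernel))) <|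
    or_congr (congr (treeTIso (by decide +kernel))) <|
    or_congr (congr (treeTIso (by decide +kernel))) <|
    or_congr (congr (treeTIso (by decide +kernel))) <|
    or_congr (congr (treeTIso (by decide +kernel))) (congr (treeTIso (by decide +kernel)))

end SimpleGraph

/-- a caterpillar `G` of order `n ≥ 3` satisfies `phi G ≥ ⌈n/2⌉ + 1`, with
equality iff `G` is isomorphic to one of `T(1,1), T(2,1), T(2,2), T(3,1), T(3,2), T(4,2)`. -/
theorem stmt7 {V : Type*} [Fintype V] (G : SimpleGraph V) (n : ℕ) (hn : 3 ≤ n)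
    (hcard : Fintype.card V = n) (hG : IsCaterpillar G) :
    (n + 1) / 2 + 1 ≤ phi G ∧
      (phi G = (n + 1) / 2 + 1 ↔
        Nonempty (G ≃g treeT 1 1 (by omega)) ∨
        Nonempty (G ≃g treeT 2 1 (by omega)) ∨
        Nonempty (G ≃g treeT 2 2 (by omega)) ∨
        Nonempty (G ≃g treeT 3 1 (by omega)) ∨
        Nonempty (G ≃g treeT 3 2 (by omega)) ∨
        Nonempty (G ≃g treeT 4 2 (by omega))) := by
  subst hcard
  have h := hG.1.lt_phi_or_isMinimizer hG.not_hasSpider Nat.card_eq_fintype_card hn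
  refine ⟨h.elim le_of_lt fun h => h.phi_eq.ge, ?_⟩
  rw [← exists_iso_parentGraph_iff_treeT]
  constructor
  · intro heq
    obtain ⟨l, hl, -, f⟩ := h.resolve_left heq.not_gt
    exact ⟨l, hl, f⟩
  · rintro ⟨l, hl, ⟨f⟩⟩
    rw [phi_of_iso_minimizer hl f, Fintype.card_congr f.toEquiv, Fintype.card_fin]
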